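/- For every integer n ≥ 0, A_n·ζ(3) − B_n = (1/2) ∫_0^1 ∫_0^1 ∫_0^1 ( xyz(1−x)(1−y)(1−z) / (1 − z + xyz) )^n · dx dy dz / (1 − z + xyz), the triple integral over the open unit cube being convergent. -/

import Mathlib

open MeasureTheory

/-- The Apéry sequence `A_n = ∑_{ℓ=0}^n binom(n,ℓ)² binom(n+ℓ,ℓ)²`. -/
def aperyA (n : ℕ) : ℕ :=
  ∑ ℓ ∈ Finset.range (n + 1), (n.choose ℓ) ^ 2 * ((n + ℓ).choose ℓ) ^ 2

/-- The second Apéry sequence (with `B_0 = 0`). -/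
noncomputable def aperyB (n : ℕ) : ℚ :=
  ∑ ℓ ∈ Finset.range (n + 1),
    ((n.choose ℓ : ℚ)) ^ 2 * (((n + ℓ).choose ℓ : ℚ)) ^ 2 *
      ((∑ m ∈ Finset.Icc 1 n, (1 : ℚ) / (m : ℚ) ^ 3) -
        ∑ m ∈ Finset.Icc 1 ℓ,
          (-1 : ℚ) ^ m / (2 * (m : ℚ) ^ 3 * (n.choose m : ℚ) * ((n + m).choose m : ℚ)))

/-!
For fixed `x` and `y`, the substitution `z = w / (y + w)` turns the integrand into a function of
`(x, w)` times a function of `(y, w)`. Integrating each factor by parts `n` times replaces the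
`n`-th powers by the shifted Legendre polynomials `P_n(x)` and `P_n(y)` and leaves the kernel
`1 / ((y + w) (1 + x w))`, whose integral over `w` is
`(-log x - log y) / (1 - x y) = ∑ j ≥ 0, (-log x - log y) (x y) ^ j`.
Hence the triple integral equals `∑ j ≥ 1, -(R_n²)'(j)`, where `R_n` is the rational function
`t ↦ ∫₀¹ x ^ (t - 1) P_n(x) dx`. Creative telescoping, applied to `R_n²` and to the sums defining
`A_n` and `B_n`, shows that both sides of the identity satisfy Apéry's second-order recurrence; they
agree for `n = 0` and `n = 1`.
-/

open Filter Topology Asymptotics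

section AperyOperator

variable {K L : Type*}

/-- Apéry's second-order difference operator
`(n+2)³ u_{n+2} - (34(n+1)³ + 51(n+1)² + 27(n+1) + 5) u_{n+1} + (n+1)³ u_n`,
with the middle coefficient in factored form. -/
def aperyOp [CommRing K] (n : ℕ) (u : ℕ → K) : K :=
  ((n : K) + 2) ^ 3 * u (n + 2)
    - (2 * (n : K) + 3) * (17 * ((n : K) + 1) ^ 2 + 17 * ((n : K) + 1) + 5) * u (n + 1)
    + ((n : K) + 1) ^ 3 * u n

/-- The sequence `u` satisfies Apéry's recurrence. -/
def IsAperySolution [CommRing K] (u : ℕ → K) : Prop := ∀ n, aperyOp n u = 0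

namespace IsAperySolution

lemma map [CommRing K] [CommRing L] {u : ℕ → K} (hu : IsAperySolution u) (f : K →+* L) :
    IsAperySolution fun n => f (u n) := fun n => by
  simpa [aperyOp, map_ofNat] using congrArg f (hu n)

lemma const_mul [CommRing K] {u : ℕ → K} (hu : IsAperySolution u) (a : K) :
    IsAperySolution fun n => a * u n := fun n => by
  have h := hu n
  unfold aperyOp at h ⊢
  linear_combination a * h

lemma sub [CommRing K] {u v : ℕ → K} (hu : IsAperySolution u) (hv : IsAperySolution v) :
    IsAperySolution fun n => u n - v n := fun n => by
  have h := hu n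
  have h' := hv n
  unfold aperyOp at h h' ⊢
  linear_combination h - h'

lemma ext [Field K] [CharZero K] {u v : ℕ → K} (hu : IsAperySolution u) (hv : IsAperySolution v)
    (h0 : u 0 = v 0) (h1 : u 1 = v 1) : u = v := by
  have consecutive (n : ℕ) : u n = v n ∧ u (n + 1) = v (n + 1) := by
    induction n with
    | zero => exact ⟨h0, h1⟩
    | succ n ih =>
      refine ⟨ih.2, ?_⟩
      have hn : ((n : K) + 2) ^ 3 ≠ 0 := pow_ne_zero _ (by exact_mod_cast (n + 1).succ_ne_zero)
      have huv := (hu n).trans (hv n).symm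
      rw [aperyOp, aperyOp, ih.1, ih.2] at huv
      exact mul_left_cancel₀ hn (by linear_combination huv)
  exact funext fun n => (consecutive n).1

end IsAperySolution

lemma isAperySolution_sum_of_telescoping [CommRing K] {F G : ℕ → ℕ → K}
    (hF : ∀ n k, n < k → F n k = 0) (hG : ∀ n, G n (n + 2) = 0)
    (h_zero : ∀ n, aperyOp n (F · 0) = G n 0)
    (h_succ : ∀ n k, aperyOp n (F · (k + 1)) = G n (k + 1) - G n k) :
    IsAperySolution fun n => ∑ k ∈ Finset.range (n + 1), F n k := fun n => by
  have extend {m N : ℕ} (h : m ≤ N) :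
      ∑ k ∈ Finset.range (m + 1), F m k = ∑ k ∈ Finset.range (N + 1), F m k :=
    Finset.sum_subset (Finset.range_mono (by lia)) fun k _ hk => hF m k (by simpa using hk)
  calc aperyOp n (fun m => ∑ k ∈ Finset.range (m + 1), F m k)
      = ∑ k ∈ Finset.range (n + 2 + 1), aperyOp n (F · k) := by
        simp only [aperyOp, Finset.sum_add_distrib, Finset.sum_sub_distrib, ← Finset.mul_sum]
        rw [extend (by lia : n ≤ n + 2), extend (by lia : n + 1 ≤ n + 2)]
    _ = G n (n + 2) := by
        rw [Finset.sum_range_succ', h_zero]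
        simp only [h_succ]
        rw [Finset.sum_range_sub (G n)]
        ring
    _ = 0 := hG n

/-- The polynomial factor of Zagier's telescoping certificate. The certificate for the squared
binomial products is obtained at `t = -k`, the one for the squared Mellin transforms at `t`. -/
def certFactor [CommRing K] (m : ℕ) (t : K) : K :=
  4 * (2 * (m : K) + 1) * (t * (2 * t - 1) - (2 * (m : K) + 1) ^ 2)

end AperyOperator

section AperyNumbers

/-- The product `binom(n,k) binom(n+k,k)` whose square is the summand of `A_n`. -/
def aperyBinom (n k : ℕ) : ℕ := n.choose k * (n + k).choose k

lemma aperyBinom_zero_right (n : ℕ) : aperyBinom n 0 = 1 := by simp [aperyBinom]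

lemma aperyBinom_eq_zero {n k : ℕ} (h : n < k) : aperyBinom n k = 0 := by
  simp [aperyBinom, Nat.choose_eq_zero_of_lt h]

lemma aperyBinom_pos {n k : ℕ} (h : k ≤ n) : 0 < aperyBinom n k :=
  Nat.mul_pos (Nat.choose_pos h) (Nat.choose_pos (by lia))

lemma aperyBinom_succ_right {K : Type*} [CommRing K] (n k : ℕ) :
    (aperyBinom n (k + 1) : K) * ((k : K) + 1) ^ 2
      = aperyBinom n k * (((n : K) + 1 + k) * (n - k)) := by
  have h1 : (n.choose (k + 1) : K) * ((k : K) + 1) = n.choose k * (n - k) := by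
    rcases le_or_gt k n with h | h
    · rw [← Nat.cast_sub h]
      exact_mod_cast congrArg (Nat.cast : ℕ → K) (Nat.choose_succ_right_eq n k)
    · simp [Nat.choose_eq_zero_of_lt h, Nat.choose_eq_zero_of_lt (h.trans k.lt_succ_self)]
  have h2 : ((n + (k + 1)).choose (k + 1) : K) * ((k : K) + 1)
      = (n + k).choose k * ((n : K) + 1 + k) := by
    have := congrArg (Nat.cast : ℕ → K) (Nat.add_one_mul_choose_eq (n + k) k)
    push_cast [add_assoc] at this ⊢
    linear_combination -this
  push_cast [aperyBinom]
  linear_combination ((n + (k + 1)).choose (k + 1) : K) * (k + 1) * h1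
    + (n.choose k : K) * (n - k) * h2

/-- Zagier's certificate for the sum defining `A_n`. -/
def aperyCert (K : Type*) [CommRing K] (n k : ℕ) : K :=
  certFactor (n + 1) (-(k : K)) * (aperyBinom (n + 1) k : K) ^ 2

lemma aperyOp_aperyBinom_sq_zero {K : Type*} [CommRing K] (n : ℕ) :
    aperyOp n (fun m => (aperyBinom m 0 : K) ^ 2) = aperyCert K n 0 := by
  simp only [aperyOp, aperyCert, certFactor, aperyBinom_zero_right]
  push_cast
  ring

variable {K : Type*} [Field K] [CharZero K]

lemma aperyBinom_succ_left (n k : ℕ) :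
    (aperyBinom (n + 1) k : K) * ((n : K) + 1 - k) = aperyBinom n k * ((n : K) + 1 + k) := by
  have h1 : ((n + 1).choose k : K) * ((n : K) + 1 - k) = n.choose k * (n + 1) := by
    rcases le_or_gt k (n + 1) with h | h
    · have := congrArg (Nat.cast : ℕ → K) (Nat.choose_mul_succ_eq n k)
      push_cast [Nat.cast_sub h] at this
      exact this.symm
    · simp [Nat.choose_eq_zero_of_lt h, Nat.choose_eq_zero_of_lt (n.lt_succ_self.trans h)]
  have h2 : ((n + 1 + k).choose k : K) * ((n : K) + 1) = (n + k).choose k * ((n : K) + 1 + k) := by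
    have := congrArg (Nat.cast : ℕ → K) (Nat.choose_mul_succ_eq (n + k) k)
    rw [show n + k + 1 - k = n + 1 by lia, show n + k + 1 = n + 1 + k by ring] at this
    exact_mod_cast this.symm
  refine mul_right_cancel₀ (Nat.cast_add_one_ne_zero n : (n : K) + 1 ≠ 0) ?_
  push_cast [aperyBinom]
  linear_combination ((n + 1 + k).choose k : K) * (n + 1) * h1 + (n.choose k : K) * (n + 1) * h2

lemma aperyBinom_succ_succ (n k : ℕ) :
    (aperyBinom (n + 1) (k + 1) : K) * ((k : K) + 1) ^ 2
      = aperyBinom n k * (((n : K) + 1 + k) * (n + 2 + k)) := by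
  have h_right := aperyBinom_succ_right (K := K) (n + 1) k
  push_cast at h_right
  linear_combination h_right + ((n : K) + 2 + k) * aperyBinom_succ_left (K := K) n k

lemma aperyBinom_antidiag (n k : ℕ) :
    (aperyBinom n (k + 1) : K) * ((k : K) + 1) ^ 2
      = aperyBinom (n + 1) k * (((n : K) + 1 - k) * (n - k)) := by
  linear_combination aperyBinom_succ_right (K := K) n k
    - ((n : K) - k) * aperyBinom_succ_left (K := K) n k

/-- The four values of `aperyBinom` entering one step of the telescoping, as polynomial multiples
of a common quantity. -/
lemma exists_aperyBinom_eq_mul (n k : ℕ) : ∃ X : K,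
    (aperyBinom (n + 1) k : K) = X * ((k : K) + 1) ^ 2 ∧
    (aperyBinom n (k + 1) : K) = X * (((n : K) + 1 - k) * (n - k)) ∧
    (aperyBinom (n + 1) (k + 1) : K) = X * (((n : K) + 2 + k) * (n + 1 - k)) ∧
    (aperyBinom (n + 2) (k + 1) : K) = X * (((n : K) + 2 + k) * (n + 3 + k)) := by
  have hk : ((k : K) + 1) ^ 2 ≠ 0 := pow_ne_zero _ (Nat.cast_add_one_ne_zero k)
  have h_right := aperyBinom_succ_right (K := K) (n + 1) k
  have h_diag := aperyBinom_succ_succ (K := K) (n + 1) k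
  push_cast at h_right h_diag
  refine ⟨aperyBinom (n + 1) k / ((k : K) + 1) ^ 2, (div_mul_cancel₀ _ hk).symm, ?_, ?_, ?_⟩ <;>
    rw [div_mul_eq_mul_div, eq_div_iff hk]
  · exact aperyBinom_antidiag n k
  · linear_combination h_right
  · linear_combination h_diag

lemma aperyOp_aperyBinom_sq_succ (n k : ℕ) :
    aperyOp n (fun m => (aperyBinom m (k + 1) : K) ^ 2)
      = aperyCert K n (k + 1) - aperyCert K n k := by
  obtain ⟨X, h0, h1, h2, h3⟩ := exists_aperyBinom_eq_mul (K := K) n k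
  simp only [aperyOp, aperyCert, certFactor, h0, h1, h2, h3]
  push_cast
  ring

lemma isAperySolution_aperyA : IsAperySolution fun n => (aperyA n : K) := by
  have h_sum : (fun n => (aperyA n : K))
      = fun n => ∑ k ∈ Finset.range (n + 1), (aperyBinom n k : K) ^ 2 := by
    funext n
    push_cast [aperyA, aperyBinom, mul_pow]
    rfl
  rw [h_sum]
  exact isAperySolution_sum_of_telescoping (G := aperyCert K)
    (fun n k h => by simp [aperyBinom_eq_zero h])
    (fun n => by simp [aperyCert, aperyBinom_eq_zero (show n + 1 < n + 2 by lia)])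
    aperyOp_aperyBinom_sq_zero aperyOp_aperyBinom_sq_succ

end AperyNumbers

section SecondAperyNumbers

/-- Apéry's `c_{n,k}`, the approximation to `ζ(3)` weighting the `k`-th summand of `B_n`. For
`k > n` the summands with `m > n` have a zero denominator and vanish. -/
def aperyWeight (n k : ℕ) : ℚ :=
  (∑ m ∈ Finset.Icc 1 n, (1 : ℚ) / (m : ℚ) ^ 3) -
    ∑ m ∈ Finset.Icc 1 k,
      (-1 : ℚ) ^ m / (2 * (m : ℚ) ^ 3 * (n.choose m : ℚ) * ((n + m).choose m : ℚ))

lemma aperyWeight_succ_zero (n : ℕ) :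
    aperyWeight (n + 1) 0 = aperyWeight n 0 + 1 / ((n : ℚ) + 1) ^ 3 := by
  simp [aperyWeight, Finset.sum_Icc_succ_top]

lemma aperyBinom_mul_aperyWeight_sub_right {n k : ℕ} (h : k < n) :
    aperyBinom n (k + 1) * (aperyWeight n (k + 1) - aperyWeight n k)
      = (-1) ^ k / (2 * ((k : ℚ) + 1) ^ 3) := by
  have h_pos : (0 : ℚ) < aperyBinom n (k + 1) := by exact_mod_cast aperyBinom_pos h
  have h_diff : aperyWeight n (k + 1) - aperyWeight n k
      = (-1) ^ k / (2 * ((k : ℚ) + 1) ^ 3 * aperyBinom n (k + 1)) := by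
    rw [aperyWeight, aperyWeight, Finset.sum_Icc_succ_top (by lia)]
    push_cast [aperyBinom]
    ring
  rw [h_diff]
  field_simp

lemma aperyBinom_mul_aperyWeight_sub_left {n k : ℕ} (h : k ≤ n) :
    aperyBinom n k * ((n : ℚ) + 1 + k) * (aperyWeight (n + 1) k - aperyWeight n k)
      = (-1) ^ k / ((n : ℚ) + 1) ^ 2 := by
  induction k with
  | zero =>
    rw [aperyWeight_succ_zero, aperyBinom_zero_right]
    field_simp
    simp
  | succ k ih =>
    have h_prev := ih (by lia)
    have h_row := aperyBinom_mul_aperyWeight_sub_right h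
    have h_row' := aperyBinom_mul_aperyWeight_sub_right (show k < n + 1 by lia)
    have h_right := aperyBinom_succ_right (K := ℚ) n k
    have h_left := aperyBinom_succ_left (K := ℚ) n (k + 1)
    push_cast at h_left ⊢
    have h_fractions : ((k : ℚ) + 1) ^ 2 * (n - k) * ((-1) ^ k / (2 * ((k : ℚ) + 1) ^ 3))
        + (n + 2 + k) * (n - k) * ((-1) ^ k / ((n : ℚ) + 1) ^ 2)
        - (k + 1) ^ 2 * (n + 2 + k) * ((-1) ^ k / (2 * ((k : ℚ) + 1) ^ 3))
        = (k + 1) ^ 2 * ((-1) ^ (k + 1) / ((n : ℚ) + 1) ^ 2) := by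
      field_simp
      ring
    refine mul_left_cancel₀ (pow_ne_zero 2 (Nat.cast_add_one_ne_zero k : (k : ℚ) + 1 ≠ 0)) ?_
    linear_combination ((k : ℚ) + 1) ^ 2 * (n - k) * h_row'
      - (k + 1) ^ 2 * (aperyWeight (n + 1) (k + 1) - aperyWeight (n + 1) k) * h_left
      + (n + 2 + k) * (aperyWeight (n + 1) k - aperyWeight n k) * h_right
      + (n + 2 + k) * (n - k) * h_prev - (k + 1) ^ 2 * (n + 2 + k) * h_row + h_fractions

/-- The second factor `aperyBinom` makes this identity and its two companions below valid beyond the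
range `k ≤ n` in which `aperyWeight` is meaningful. -/
lemma aperyBinom_sq_mul_aperyWeight_sub_right (n k : ℕ) :
    (aperyBinom n (k + 1) : ℚ) ^ 2 * (aperyWeight n (k + 1) - aperyWeight n k)
      = aperyBinom n (k + 1) * ((-1) ^ k / (2 * ((k : ℚ) + 1) ^ 3)) := by
  rcases lt_or_ge k n with h | h
  · rw [← aperyBinom_mul_aperyWeight_sub_right h]
    ring
  · simp [aperyBinom_eq_zero (show n < k + 1 by lia)]

lemma aperyBinom_sq_mul_aperyWeight_sub_diag (n k : ℕ) :
    (aperyBinom (n + 1) (k + 1) : ℚ) ^ 2 * (aperyWeight (n + 1) (k + 1) - aperyWeight n k)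
      = aperyBinom (n + 1) (k + 1) * ((-1) ^ k / (2 * ((k : ℚ) + 1) ^ 3)
        + (n + 2 + k) * (-1) ^ k / (((k : ℚ) + 1) ^ 2 * ((n : ℚ) + 1) ^ 2)) := by
  rcases le_or_gt k n with h | h
  · have h_right := aperyBinom_mul_aperyWeight_sub_right (show k < n + 1 by lia)
    have h_left := aperyBinom_mul_aperyWeight_sub_left h
    have h_diag : (aperyBinom (n + 1) (k + 1) : ℚ)
        = aperyBinom n k * (((n : ℚ) + 1 + k) * (n + 2 + k)) / ((k : ℚ) + 1) ^ 2 := by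
      rw [eq_div_iff (by positivity), aperyBinom_succ_succ]
    rw [sq, mul_assoc]
    congr 1
    calc (aperyBinom (n + 1) (k + 1) : ℚ) * (aperyWeight (n + 1) (k + 1) - aperyWeight n k)
        = aperyBinom (n + 1) (k + 1) * (aperyWeight (n + 1) (k + 1) - aperyWeight (n + 1) k)
          + (n + 2 + k) / ((k : ℚ) + 1) ^ 2 * (aperyBinom n k * ((n : ℚ) + 1 + k)
            * (aperyWeight (n + 1) k - aperyWeight n k)) := by rw [h_diag]; ring
      _ = _ := by rw [h_right, h_left]; field_simp
  · simp [aperyBinom_eq_zero (show n + 1 < k + 1 by lia)]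

lemma aperyBinom_sq_mul_aperyWeight_sub_antidiag (n k : ℕ) :
    (aperyBinom n (k + 1) : ℚ) ^ 2 * (aperyWeight n (k + 1) - aperyWeight (n + 1) k)
      = aperyBinom n (k + 1) * ((-1) ^ k / (2 * ((k : ℚ) + 1) ^ 3)
        - (n - k) * (-1) ^ k / (((k : ℚ) + 1) ^ 2 * ((n : ℚ) + 1) ^ 2)) := by
  rcases lt_or_ge k n with h | h
  · have h_right := aperyBinom_mul_aperyWeight_sub_right h
    have h_left := aperyBinom_mul_aperyWeight_sub_left h.le
    have h_next : (aperyBinom n (k + 1) : ℚ)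
        = aperyBinom n k * (((n : ℚ) + 1 + k) * (n - k)) / ((k : ℚ) + 1) ^ 2 := by
      rw [eq_div_iff (by positivity), aperyBinom_succ_right]
    rw [sq, mul_assoc]
    congr 1
    calc (aperyBinom n (k + 1) : ℚ) * (aperyWeight n (k + 1) - aperyWeight (n + 1) k)
        = aperyBinom n (k + 1) * (aperyWeight n (k + 1) - aperyWeight n k)
          - (n - k) / ((k : ℚ) + 1) ^ 2 * (aperyBinom n k * ((n : ℚ) + 1 + k)
            * (aperyWeight (n + 1) k - aperyWeight n k)) := by rw [h_next]; ring
      _ = _ := by rw [h_right, h_left]; field_simp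
  · simp [aperyBinom_eq_zero (show n < k + 1 by lia)]

/-- Zagier's certificate for the sum defining `B_n`. -/
def aperyWeightCert (n k : ℕ) : ℚ :=
  aperyCert ℚ n k * aperyWeight (n + 1) k
    - 5 * (2 * n + 3) * (-1) ^ k * k / ((n + 1) * (n + 2)) * aperyBinom (n + 1) k

lemma aperyOp_aperyWeight_zero (n : ℕ) :
    aperyOp n (fun m => (aperyBinom m 0 : ℚ) ^ 2 * aperyWeight m 0) = aperyWeightCert n 0 := by
  simp only [aperyOp, aperyWeightCert, aperyCert, certFactor, aperyBinom_zero_right,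
    aperyWeight_succ_zero]
  push_cast
  field_simp
  ring

lemma aperyOp_aperyWeight_succ (n k : ℕ) :
    aperyOp n (fun m => (aperyBinom m (k + 1) : ℚ) ^ 2 * aperyWeight m (k + 1))
      = aperyWeightCert n (k + 1) - aperyWeightCert n k := by
  have h_cert := aperyOp_aperyBinom_sq_succ (K := ℚ) n k
  have h_right := aperyBinom_sq_mul_aperyWeight_sub_right (n + 1) k
  have h_diag := aperyBinom_sq_mul_aperyWeight_sub_diag (n + 1) k
  have h_antidiag := aperyBinom_sq_mul_aperyWeight_sub_antidiag n k
  obtain ⟨X, h0, h1, h2, h3⟩ := exists_aperyBinom_eq_mul (K := ℚ) n k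
  have h_remainder : ((n : ℚ) + 2) ^ 3 * (aperyBinom (n + 2) (k + 1)
          * ((-1) ^ k / (2 * ((k : ℚ) + 1) ^ 3)
            + (n + 1 + 2 + k) * (-1) ^ k / (((k : ℚ) + 1) ^ 2 * ((n : ℚ) + 1 + 1) ^ 2)))
      - ((2 * n + 3) * (17 * (n + 1) ^ 2 + 17 * (n + 1) + 5) + certFactor (n + 1) (-((k : ℚ) + 1)))
        * (aperyBinom (n + 1) (k + 1) * ((-1) ^ k / (2 * ((k : ℚ) + 1) ^ 3)))
      + (n + 1) ^ 3 * (aperyBinom n (k + 1) * ((-1) ^ k / (2 * ((k : ℚ) + 1) ^ 3)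
        - (n - k) * (-1) ^ k / (((k : ℚ) + 1) ^ 2 * ((n : ℚ) + 1) ^ 2)))
      = 5 * (2 * n + 3) * (-1) ^ k / ((n + 1) * (n + 2))
        * ((k + 1) * aperyBinom (n + 1) (k + 1) + k * aperyBinom (n + 1) k) := by
    rw [h0, h1, h2, h3, certFactor]
    push_cast
    field_simp
    ring
  simp only [aperyOp, aperyWeightCert, aperyCert] at h_cert ⊢
  push_cast at h_cert h_diag ⊢
  linear_combination ((n : ℚ) + 2) ^ 3 * h_diag
    - ((2 * n + 3) * (17 * (n + 1) ^ 2 + 17 * (n + 1) + 5) + certFactor (n + 1) (-((k : ℚ) + 1)))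
      * h_right + (n + 1) ^ 3 * h_antidiag + h_remainder + aperyWeight (n + 1) k * h_cert

lemma isAperySolution_aperyB : IsAperySolution aperyB := by
  have h_sum : aperyB
      = fun n => ∑ k ∈ Finset.range (n + 1), (aperyBinom n k : ℚ) ^ 2 * aperyWeight n k := by
    funext n
    push_cast [aperyB, aperyBinom, aperyWeight, mul_pow]
    rfl
  rw [h_sum]
  exact isAperySolution_sum_of_telescoping (G := aperyWeightCert)
    (fun n k h => by simp [aperyBinom_eq_zero h])
    (fun n => by simp [aperyWeightCert, aperyCert, aperyBinom_eq_zero (show n + 1 < n + 2 by lia)])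
    aperyOp_aperyWeight_zero aperyOp_aperyWeight_succ

end SecondAperyNumbers

section LegendreMellin

open Polynomial in
lemma aeval_shiftedLegendre_eq_sum (n : ℕ) (x : ℝ) :
    aeval x (shiftedLegendre n)
      = ∑ k ∈ Finset.range (n + 1), (-1) ^ k * (aperyBinom n k : ℝ) * x ^ k := by
  simp only [shiftedLegendre, map_sum, map_mul, map_pow, aeval_X, aperyBinom, Nat.cast_mul]
  refine Finset.sum_congr rfl fun k _ => ?_
  rw [Nat.choose_symm_add]
  simp [mul_assoc]

lemma sum_neg_one_pow_mul_aperyBinom (n : ℕ) :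
    ∑ k ∈ Finset.range (n + 1), (-1) ^ k * (aperyBinom n k : ℝ) = (-1) ^ n := by
  have h_symm := Polynomial.shiftedLegendre_eval_symm n (1 : ℝ)
  rw [sub_self, aeval_shiftedLegendre_eq_sum, aeval_shiftedLegendre_eq_sum,
    Finset.sum_range_succ'] at h_symm
  simpa [aperyBinom_zero_right, Finset.sum_range_succ'] using h_symm

/-- The rational function `R_n(t) = ∫₀¹ x^(t-1) P_n(x) dx`, the Mellin transform of the shifted
Legendre polynomial `P_n`, defined by its partial fraction expansion. -/
noncomputable def legendreMellin (n : ℕ) (t : ℝ) : ℝ :=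
  ∑ k ∈ Finset.range (n + 1), (-1) ^ k * (aperyBinom n k : ℝ) / (t + k)

/-- The rational function `-R_n'(t) = ∫₀¹ -log x · x^(t-1) P_n(x) dx`, defined by its partial
fraction expansion. -/
noncomputable def legendreLogMellin (n : ℕ) (t : ℝ) : ℝ :=
  ∑ k ∈ Finset.range (n + 1), (-1) ^ k * (aperyBinom n k : ℝ) / (t + k) ^ 2

lemma legendreMellin_zero (t : ℝ) : legendreMellin 0 t = 1 / t := by
  simp [legendreMellin, aperyBinom]

lemma legendreMellin_succ (n : ℕ) {t : ℝ} (ht : 0 < t) :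
    legendreMellin (n + 1) t = (n + 1 - t) * legendreMellin n t / (t + n + 1) := by
  have h_succ : legendreMellin (n + 1) t * (t + n + 1)
      = (-1) ^ (n + 1) + ∑ k ∈ Finset.range (n + 2),
        (-1) ^ k * ((aperyBinom (n + 1) k : ℝ) * ((n : ℝ) + 1 - k)) / (t + k) := by
    rw [← sum_neg_one_pow_mul_aperyBinom, legendreMellin, Finset.sum_mul,
      ← Finset.sum_add_distrib]
    refine Finset.sum_congr rfl fun k _ => ?_
    field_simp
    ring
  have h_self : (n + 1 - t) * legendreMellin n t
      = -(-1) ^ n + ∑ k ∈ Finset.range (n + 2),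
        (-1) ^ k * ((aperyBinom n k : ℝ) * ((n : ℝ) + 1 + k)) / (t + k) := by
    rw [← sum_neg_one_pow_mul_aperyBinom, legendreMellin, Finset.sum_range_succ _ (n + 1),
      aperyBinom_eq_zero n.lt_succ_self, Finset.mul_sum, ← Finset.sum_neg_distrib]
    simp only [Nat.cast_zero, zero_mul, mul_zero, zero_div, add_zero]
    rw [← Finset.sum_add_distrib]
    refine Finset.sum_congr rfl fun k _ => ?_
    field_simp
    ring
  rw [eq_div_iff (by positivity), h_succ, h_self]
  simp only [aperyBinom_succ_left, pow_succ, mul_neg_one]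

lemma legendreMellin_succ_add_one (n : ℕ) {t : ℝ} (ht : 0 < t) :
    legendreMellin (n + 1) (t + 1)
      = -t ^ 2 * legendreMellin n t / ((t + n + 1) * (t + n + 2)) := by
  induction n with
  | zero =>
    rw [legendreMellin_succ 0 (by positivity), legendreMellin_zero, legendreMellin_zero]
    push_cast
    field_simp
    ring
  | succ n ih =>
    rw [legendreMellin_succ (n + 1) (by positivity), ih, legendreMellin_succ n ht]
    push_cast
    field_simp
    ring

lemma legendreMellin_succ_one (n : ℕ) : legendreMellin (n + 1) 1 = 0 := by
  induction n with
  | zero => simp [legendreMellin_succ 0 one_pos]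
  | succ n ih => rw [legendreMellin_succ (n + 1) one_pos, ih, mul_zero, zero_div]

lemma hasDerivAt_legendreMellin (n : ℕ) {t : ℝ} (ht : 0 < t) :
    HasDerivAt (legendreMellin n) (-legendreLogMellin n t) t := by
  unfold legendreMellin legendreLogMellin
  rw [← Finset.sum_neg_distrib]
  refine HasDerivAt.fun_sum fun k _ => ?_
  have h_ne : t + k ≠ 0 := by positivity
  refine ((((hasDerivAt_id t).add_const (k : ℝ)).inv h_ne).const_mul
    ((-1) ^ k * (aperyBinom n k : ℝ))).congr_deriv ?_
  simp only [id]
  ring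

lemma legendreMellin_isBigO (n : ℕ) : legendreMellin n =O[atTop] fun t => t⁻¹ := by
  refine IsBigO.fun_sum fun k _ => ?_
  simp only [div_eq_mul_inv]
  refine IsBigO.const_mul_left (IsBigO.of_bound' ?_) _
  filter_upwards [eventually_gt_atTop 0] with t ht
  rw [Real.norm_of_nonneg (by positivity), Real.norm_of_nonneg (by positivity)]
  gcongr
  simp

lemma legendreLogMellin_isBigO (n : ℕ) : legendreLogMellin n =O[atTop] fun t => (t ^ 2)⁻¹ := by
  refine IsBigO.fun_sum fun k _ => ?_
  simp only [div_eq_mul_inv]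
  refine IsBigO.const_mul_left (IsBigO.of_bound' ?_) _
  filter_upwards [eventually_gt_atTop 0] with t ht
  rw [Real.norm_of_nonneg (by positivity), Real.norm_of_nonneg (by positivity)]
  gcongr
  simp

/-- The function `-(R_n²)'(t) = 2 R_n(t) · (-R_n'(t))`, whose values at the positive integers sum
to the Beukers integral. -/
noncomputable def negDerivMellinSq (n : ℕ) (t : ℝ) : ℝ :=
  2 * legendreMellin n t * legendreLogMellin n t

lemma negDerivMellinSq_zero (t : ℝ) : negDerivMellinSq 0 t = 2 / t ^ 3 := by
  simp only [negDerivMellinSq, legendreMellin, legendreLogMellin, aperyBinom, zero_add,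
    Finset.sum_range_one, pow_zero, Nat.choose_self, mul_one, Nat.cast_one, Nat.cast_zero, add_zero]
  ring

lemma hasDerivAt_legendreMellin_sq (n : ℕ) {t : ℝ} (ht : 0 < t) :
    HasDerivAt (fun t => legendreMellin n t ^ 2) (-negDerivMellinSq n t) t := by
  refine ((hasDerivAt_legendreMellin n ht).pow 2).congr_deriv ?_
  unfold negDerivMellinSq
  simp

end LegendreMellin

section MellinTelescoping

/-- Zagier's certificate for the squares `R_n(t)²`. -/
noncomputable def mellinCert (n : ℕ) (t : ℝ) : ℝ := certFactor n t * legendreMellin n t ^ 2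

/-- The derivative of `mellinCert n`. -/
noncomputable def mellinCertDeriv (n : ℕ) (t : ℝ) : ℝ :=
  4 * (2 * n + 1) * (4 * t - 1) * legendreMellin n t ^ 2 - certFactor n t * negDerivMellinSq n t

lemma hasDerivAt_mellinCert (n : ℕ) {t : ℝ} (ht : 0 < t) :
    HasDerivAt (mellinCert n) (mellinCertDeriv n t) t := by
  have h_factor : HasDerivAt (certFactor n) (4 * (2 * (n : ℝ) + 1) * (4 * t - 1)) t := by
    refine ((((hasDerivAt_id t).mul (((hasDerivAt_id t).const_mul 2).sub_const 1)).sub_const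
      ((2 * (n : ℝ) + 1) ^ 2)).const_mul (4 * (2 * (n : ℝ) + 1))).congr_deriv ?_
    simp only [id]
    ring
  refine (h_factor.mul (hasDerivAt_legendreMellin_sq n ht)).congr_deriv ?_
  unfold mellinCertDeriv
  ring

lemma aperyOp_legendreMellin_sq (n : ℕ) {t : ℝ} (ht : 0 < t) :
    aperyOp n (fun m => legendreMellin m t ^ 2)
      = mellinCert (n + 1) t - mellinCert (n + 1) (t + 1) := by
  simp only [aperyOp, mellinCert, certFactor]
  rw [legendreMellin_succ_add_one n ht, legendreMellin_succ (n + 1) ht, legendreMellin_succ n ht]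
  push_cast
  field_simp
  ring

/-- The telescoped recurrence at index `-1`, where the coefficient of the earliest term vanishes. -/
lemma legendreMellin_one_sq_sub {t : ℝ} (ht : 0 < t) :
    legendreMellin 1 t ^ 2 - 5 * legendreMellin 0 t ^ 2
      = mellinCert 0 t - mellinCert 0 (t + 1) := by
  simp only [mellinCert, certFactor]
  rw [legendreMellin_succ 0 ht, legendreMellin_zero, legendreMellin_zero]
  push_cast
  field_simp
  ring

lemma hasDerivAt_mellinCert_sub_shift (n : ℕ) {t : ℝ} (ht : 0 < t) :
    HasDerivAt (fun t => mellinCert n t - mellinCert n (t + 1))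
      (mellinCertDeriv n t - mellinCertDeriv n (t + 1)) t :=
  (hasDerivAt_mellinCert n ht).sub
    ((hasDerivAt_mellinCert n (by positivity : 0 < t + 1)).comp_add_const t 1)

lemma aperyOp_negDerivMellinSq (n : ℕ) {t : ℝ} (ht : 0 < t) :
    aperyOp n (fun m => negDerivMellinSq m t)
      = mellinCertDeriv (n + 1) (t + 1) - mellinCertDeriv (n + 1) t := by
  have h_deriv : HasDerivAt (fun t => aperyOp n fun m => legendreMellin m t ^ 2)
      (aperyOp n fun m => -negDerivMellinSq m t) t :=
    (((hasDerivAt_legendreMellin_sq (n + 2) ht).const_mul _).sub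
      ((hasDerivAt_legendreMellin_sq (n + 1) ht).const_mul _)).add
      ((hasDerivAt_legendreMellin_sq n ht).const_mul _)
  have h_eq := h_deriv.unique ((hasDerivAt_mellinCert_sub_shift (n + 1) ht).congr_of_eventuallyEq
    (by filter_upwards [lt_mem_nhds ht] with s hs using aperyOp_legendreMellin_sq n hs))
  unfold aperyOp at h_eq ⊢
  linear_combination -h_eq

lemma negDerivMellinSq_one_sub {t : ℝ} (ht : 0 < t) :
    negDerivMellinSq 1 t - 5 * negDerivMellinSq 0 t
      = mellinCertDeriv 0 (t + 1) - mellinCertDeriv 0 t := by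
  have h_deriv := (hasDerivAt_legendreMellin_sq 1 ht).sub
    ((hasDerivAt_legendreMellin_sq 0 ht).const_mul 5)
  have h_eq := h_deriv.unique ((hasDerivAt_mellinCert_sub_shift 0 ht).congr_of_eventuallyEq
    (by filter_upwards [lt_mem_nhds ht] with s hs using legendreMellin_one_sq_sub hs))
  linear_combination -h_eq

lemma tendsto_mellinCertDeriv_atTop (n : ℕ) : Tendsto (mellinCertDeriv n) atTop (𝓝 0) := by
  have h_affine (a : ℝ) : (fun t : ℝ => a * t - 1) =O[atTop] fun t => t :=
    ((isBigO_refl _ _).const_mul_left a).sub (isLittleO_const_id_atTop 1).isBigO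
  have h_linear : (fun t : ℝ => 4 * (2 * (n : ℝ) + 1) * (4 * t - 1)) =O[atTop] fun t => t :=
    (h_affine 4).const_mul_left _
  have h_quadratic : (certFactor n : ℝ → ℝ) =O[atTop] fun t => t ^ 2 := by
    have h_mul := (isBigO_refl (fun t : ℝ => t) atTop).mul (h_affine 2)
    simp only [← sq] at h_mul
    exact (h_mul.sub ((isLittleO_const_id_atTop (2 * (n : ℝ) + 1)).isBigO.pow 2)).const_mul_left _
  have h_bigO : mellinCertDeriv n =O[atTop] fun t => t⁻¹ := by
    refine ((h_linear.mul ((legendreMellin_isBigO n).pow 2)).congr' .rfl ?_).sub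
      ((h_quadratic.mul (((legendreMellin_isBigO n).const_mul_left 2).mul
        (legendreLogMellin_isBigO n))).congr' .rfl ?_) <;>
    · filter_upwards [eventually_gt_atTop 0] with t ht
      field_simp
  exact h_bigO.trans_tendsto tendsto_inv_atTop_zero

lemma eq_neg_mellinCertDeriv_of_hasSum_sub {n : ℕ} {S : ℝ}
    (h : HasSum (fun j : ℕ => mellinCertDeriv n ((j : ℝ) + 1 + 1) - mellinCertDeriv n ((j : ℝ) + 1))
      S) : S = -mellinCertDeriv n 1 := by
  have h_partial (N : ℕ) : ∑ j ∈ Finset.range N,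
      (mellinCertDeriv n ((j : ℝ) + 1 + 1) - mellinCertDeriv n ((j : ℝ) + 1))
        = mellinCertDeriv n ((N : ℝ) + 1) - mellinCertDeriv n 1 := by
    simpa using Finset.sum_range_sub (fun j : ℕ => mellinCertDeriv n ((j : ℝ) + 1)) N
  have h_lim : Tendsto (fun N : ℕ => mellinCertDeriv n ((N : ℝ) + 1) - mellinCertDeriv n 1) atTop
      (𝓝 (0 - mellinCertDeriv n 1)) :=
    ((tendsto_mellinCertDeriv_atTop n).comp
      (tendsto_atTop_add_const_right _ 1 tendsto_natCast_atTop_atTop)).sub_const _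
  rw [← zero_sub]
  exact tendsto_nhds_unique (h.tendsto_sum_nat.congr h_partial) h_lim

lemma eq_aperyA_mul_zeta_three_sub_aperyB {J : ℕ → ℝ}
    (hJ : ∀ n, HasSum (fun j : ℕ => negDerivMellinSq n ((j : ℝ) + 1)) (J n)) (n : ℕ) :
    J n = 2 * ((aperyA n : ℝ) * (∑' m : ℕ, 1 / ((m : ℝ) + 1) ^ 3) - (aperyB n : ℝ)) := by
  set ζ3 : ℝ := ∑' m : ℕ, 1 / ((m : ℝ) + 1) ^ 3
  have h_zero : J 0 = 2 * ζ3 := by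
    rw [← (hJ 0).tsum_eq, ← tsum_mul_left]
    congr 1 with j
    rw [negDerivMellinSq_zero, mul_one_div]
  have h_one : J 1 = 5 * J 0 - 12 := by
    have h_sum := (hJ 1).sub ((hJ 0).mul_left 5)
    simp only [negDerivMellinSq_one_sub (Nat.cast_add_one_pos _)] at h_sum
    have h_boundary : mellinCertDeriv 0 1 = 12 := by
      norm_num [mellinCertDeriv, certFactor, negDerivMellinSq, legendreMellin, legendreLogMellin,
        aperyBinom]
    linarith [eq_neg_mellinCertDeriv_of_hasSum_sub h_sum]
  have h_rec : IsAperySolution J := fun n => by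
    have h_sum : HasSum (fun j : ℕ => aperyOp n fun m => negDerivMellinSq m ((j : ℝ) + 1))
        (aperyOp n J) :=
      (((hJ (n + 2)).mul_left _).sub ((hJ (n + 1)).mul_left _)).add ((hJ n).mul_left _)
    simp only [aperyOp_negDerivMellinSq _ (Nat.cast_add_one_pos _)] at h_sum
    rw [eq_neg_mellinCertDeriv_of_hasSum_sub h_sum]
    simp [mellinCertDeriv, negDerivMellinSq, legendreMellin_succ_one]
  have h_rec' : IsAperySolution fun n => 2 * ((aperyA n : ℝ) * ζ3 - (aperyB n : ℝ)) := by
    simpa [mul_comm ζ3] using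
      ((isAperySolution_aperyA.const_mul ζ3).sub
        (isAperySolution_aperyB.map (Rat.castHom ℝ))).const_mul 2
  refine congrFun (h_rec.ext h_rec' ?_ ?_) n
  · rw [h_zero]
    norm_num [aperyA, aperyB]
  · rw [h_one, h_zero]
    norm_num [aperyA, aperyB, Finset.sum_range_succ]
    ring

end MellinTelescoping

section RepeatedIntegrationByParts

open Polynomial

lemma integral_derivative_div_add_pow {p : ℝ[X]} {a b w : ℝ} (ha : p.eval a = 0)
    (hb : p.eval b = 0) (hw : ∀ y ∈ Set.uIcc a b, y + w ≠ 0) (m : ℕ) :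
    ∫ y in a..b, (derivative p).eval y / (y + w) ^ (m + 1)
      = (m + 1) * ∫ y in a..b, p.eval y / (y + w) ^ (m + 2) := by
  have h_deriv_inv : ∀ y ∈ Set.uIcc a b,
      HasDerivAt (fun y => ((y + w) ^ (m + 1))⁻¹) (-((m + 1) / (y + w) ^ (m + 2))) y := by
    intro y hy
    have h_ne := hw y hy
    refine ((((hasDerivAt_id y).add_const w).pow (m + 1)).inv
      (pow_ne_zero _ h_ne)).congr_deriv ?_
    simp only [id, Pi.pow_apply, Nat.add_sub_cancel]
    push_cast
    field_simp
    ring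
  have h_parts := intervalIntegral.integral_mul_deriv_eq_deriv_mul h_deriv_inv
    (fun y _ => p.hasDerivAt y)
    (ContinuousOn.intervalIntegrable (ContinuousOn.neg (continuousOn_const.div (by fun_prop)
      fun y hy => pow_ne_zero _ (hw y hy))))
    ((derivative p).continuous.intervalIntegrable _ _)
  rw [ha, hb, mul_zero, mul_zero, sub_zero, zero_sub, ← intervalIntegral.integral_neg] at h_parts
  simp only [div_eq_inv_mul, h_parts, ← intervalIntegral.integral_const_mul]
  congr 1 with y
  ring

lemma integral_iterate_derivative_div_add {p : ℝ[X]} {a b w : ℝ} {n : ℕ}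
    (ha : (X - C a) ^ n ∣ p) (hb : (X - C b) ^ n ∣ p) (hw : ∀ y ∈ Set.uIcc a b, y + w ≠ 0) :
    ∫ y in a..b, (derivative^[n] p).eval y / (y + w)
      = n.factorial * ∫ y in a..b, p.eval y / (y + w) ^ (n + 1) := by
  induction n generalizing p with
  | zero => simp
  | succ n ih =>
    have h_root {c : ℝ} (hc : (X - C c) ^ (n + 1) ∣ p) : p.eval c = 0 :=
      dvd_iff_isRoot.1 ((dvd_pow_self _ n.succ_ne_zero).trans hc)
    have h_dvd {c : ℝ} (hc : (X - C c) ^ (n + 1) ∣ p) : (X - C c) ^ n ∣ derivative p := by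
      simpa only [Nat.add_sub_cancel] using pow_sub_one_dvd_derivative_of_pow_dvd hc
    rw [Function.iterate_succ_apply, ih (h_dvd ha) (h_dvd hb),
      integral_derivative_div_add_pow (h_root ha) (h_root hb) hw, Nat.factorial_succ]
    push_cast
    ring

lemma factorial_mul_aeval_shiftedLegendre (n : ℕ) (x : ℝ) :
    n.factorial * aeval x (shiftedLegendre n)
      = (derivative^[n] (X ^ n * (1 - X) ^ n : ℝ[X])).eval x := by
  have h_rodrigues := congrArg (aeval x) (factorial_mul_shiftedLegendre_eq n)
  rw [map_mul, map_natCast, ← aeval_map_algebraMap ℝ x (derivative^[n] _),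
    ← iterate_derivative_map] at h_rodrigues
  simpa using h_rodrigues

lemma integral_shiftedLegendre_div_add (n : ℕ) {w : ℝ} (hw : 0 < w) :
    ∫ y in (0 : ℝ)..1, aeval y (shiftedLegendre n) / (y + w)
      = ∫ y in (0 : ℝ)..1, y ^ n * (1 - y) ^ n / (y + w) ^ (n + 1) := by
  have h_zero : (X - C (0 : ℝ)) ^ n ∣ X ^ n * (1 - X) ^ n := by simp
  have h_one : (X - C (1 : ℝ)) ^ n ∣ X ^ n * (1 - X) ^ n :=
    (pow_dvd_pow_of_dvd (dvd_iff_isRoot.2 (by simp)) n).mul_left _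
  have h_pos : ∀ y ∈ Set.uIcc (0 : ℝ) 1, y + w ≠ 0 := fun y hy => by
    rw [Set.uIcc_of_le zero_le_one] at hy
    linarith [hy.1]
  have h_parts := integral_iterate_derivative_div_add h_zero h_one h_pos
  refine mul_left_cancel₀ (Nat.cast_ne_zero.2 n.factorial_ne_zero : (n.factorial : ℝ) ≠ 0) ?_
  simpa [← factorial_mul_aeval_shiftedLegendre, mul_div_assoc,
    intervalIntegral.integral_const_mul] using h_parts

lemma integral_shiftedLegendre_div_one_add_mul (n : ℕ) {w : ℝ} (hw : 0 < w) :
    ∫ x in (0 : ℝ)..1, aeval x (shiftedLegendre n) / (1 + x * w)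
      = ∫ x in (0 : ℝ)..1, x ^ n * (1 - x) ^ n * w ^ n / (1 + x * w) ^ (n + 1) := by
  have h_denom (x : ℝ) : 1 + x * w = w * (x + w⁻¹) := by field_simp; ring
  have h_left (x : ℝ) : aeval x (shiftedLegendre n) / (1 + x * w)
      = w⁻¹ * (aeval x (shiftedLegendre n) / (x + w⁻¹)) := by
    rw [h_denom, div_mul_eq_div_div_swap, div_eq_inv_mul]
  have h_right (x : ℝ) : x ^ n * (1 - x) ^ n * w ^ n / (1 + x * w) ^ (n + 1)
      = w⁻¹ * (x ^ n * (1 - x) ^ n / (x + w⁻¹) ^ (n + 1)) := by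
    rw [h_denom, mul_pow, pow_succ w]
    field_simp
  simp only [h_left, h_right, intervalIntegral.integral_const_mul,
    integral_shiftedLegendre_div_add n (inv_pos.2 hw)]

end RepeatedIntegrationByParts

section BeukersKernel

/-- Lebesgue measure on the open unit interval. -/
noncomputable abbrev unitVol : Measure ℝ := volume.restrict (Set.Ioo 0 1)

/-- Lebesgue measure on the open half-line `(0, ∞)`. -/
noncomputable abbrev posVol : Measure ℝ := volume.restrict (Set.Ioi 0)

lemma intervalIntegral_eq_integral_unitVol (f : ℝ → ℝ) :
    ∫ x in (0 : ℝ)..1, f x = ∫ x, f x ∂unitVol := by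
  rw [intervalIntegral.integral_of_le zero_le_one, integral_Ioc_eq_integral_Ioo]

lemma intervalIntegrable_iff_integrable_unitVol {f : ℝ → ℝ} :
    IntervalIntegrable f volume 0 1 ↔ Integrable f unitVol :=
  intervalIntegrable_iff_integrableOn_Ioo_of_le zero_le_one

lemma ae_unitVol_prod_mem :
    ∀ᵐ q ∂unitVol.prod unitVol, q.1 ∈ Set.Ioo (0 : ℝ) 1 ∧ q.2 ∈ Set.Ioo (0 : ℝ) 1 :=
  (Measure.quasiMeasurePreserving_fst.ae (ae_restrict_mem measurableSet_Ioo)).and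
    (Measure.quasiMeasurePreserving_snd.ae (ae_restrict_mem measurableSet_Ioo))

lemma ae_unitVol_prod_posVol_mem : ∀ᵐ p ∂(unitVol.prod unitVol).prod posVol,
    (p.1.1 ∈ Set.Ioo (0 : ℝ) 1 ∧ p.1.2 ∈ Set.Ioo (0 : ℝ) 1) ∧ 0 < p.2 :=
  (Measure.quasiMeasurePreserving_fst.ae ae_unitVol_prod_mem).and
    (Measure.quasiMeasurePreserving_snd.ae (ae_restrict_mem measurableSet_Ioi))

/-- The kernel `1 / ((y + w)(1 + xw))` that the substitution `z = w / (y + w)` produces from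
`1 / (1 - z + xyz)`. -/
noncomputable def beukersKernel (q : ℝ × ℝ) (w : ℝ) : ℝ := 1 / ((q.2 + w) * (1 + q.1 * w))

lemma beukersKernel_pos {x y w : ℝ} (hx : 0 < x) (hy : 0 < y) (hw : 0 < w) :
    0 < beukersKernel (x, y) w := by
  unfold beukersKernel
  positivity

lemma integral_beukersKernel {x y : ℝ} (hx : 0 < x) (hy : 0 < y) (hxy : x * y < 1) :
    ∫ w, beukersKernel (x, y) w ∂posVol = (-Real.log x - Real.log y) / (1 - x * y) := by
  have h_ne : 1 - x * y ≠ 0 := by linarith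
  have h_deriv : ∀ w ∈ Set.Ici (0 : ℝ), HasDerivAt
      (fun w => Real.log ((y + w) / (1 + x * w)) / (1 - x * y)) (beukersKernel (x, y) w) w := by
    intro w hw
    have hw : 0 ≤ w := hw
    refine ((((hasDerivAt_id w).const_add y).div (((hasDerivAt_id w).const_mul x).const_add 1)
      (by simp only [id]; positivity)).log
      (by simp only [id, Pi.div_apply]; positivity)).div_const (1 - x * y) |>.congr_deriv ?_
    simp only [id, beukersKernel, Pi.div_apply]
    field_simp
    ring
  have h_lim : Tendsto (fun w => (y + w) / (1 + x * w)) atTop (𝓝 (1 / x)) := by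
    have h_inv : Tendsto (fun w : ℝ => (y * w⁻¹ + 1) / (w⁻¹ + x)) atTop
        (𝓝 ((y * 0 + 1) / (0 + x))) :=
      ((tendsto_inv_atTop_zero.const_mul y).add_const 1).div
        (tendsto_inv_atTop_zero.add_const x) (by simpa using hx.ne')
    rw [mul_zero, zero_add, zero_add] at h_inv
    refine h_inv.congr' ?_
    filter_upwards [eventually_gt_atTop 0] with w hw
    field_simp
  rw [integral_Ioi_of_hasDerivAt_of_nonneg' h_deriv
    (fun w hw => (beukersKernel_pos hx hy hw).le)
    ((h_lim.log (one_div_ne_zero hx.ne')).div_const _)]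
  simp only [mul_zero, add_zero, div_one, one_div, Real.log_inv]
  ring

lemma integrable_one_div_sqrt_unitVol : Integrable (fun x : ℝ => 1 / √x) unitVol := by
  refine (intervalIntegrable_iff_integrable_unitVol.1
    (intervalIntegral.intervalIntegrable_rpow' (r := -(1 / 2)) (by norm_num))).congr ?_
  filter_upwards [ae_restrict_mem measurableSet_Ioo] with x hx
  rw [Real.rpow_neg hx.1.le, Real.sqrt_eq_rpow, one_div (x ^ _)]

lemma integrable_one_div_sqrt_mul_one_add_posVol :
    Integrable (fun w : ℝ => 1 / (√w * (1 + w))) posVol := by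
  refine integrableOn_Ioi_deriv_of_nonneg (g := fun w => 2 * Real.arctan √w)
    (by fun_prop) (fun w hw => ?_) (fun w hw => ?_)
    (((Real.tendsto_arctan_atTop.mono_right nhdsWithin_le_nhds).comp
      Real.tendsto_sqrt_atTop).const_mul 2)
  · have hw : 0 < w := hw
    refine (((Real.hasDerivAt_sqrt hw.ne').arctan).const_mul 2).congr_deriv ?_
    rw [Real.sq_sqrt hw.le]
    field_simp
  · have hw : 0 < w := hw
    positivity

lemma beukersKernel_le {x y w : ℝ} (hx : x ∈ Set.Ioo (0 : ℝ) 1) (hy : y ∈ Set.Ioo (0 : ℝ) 1)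
    (hw : 0 < w) :
    beukersKernel (x, y) w ≤ 1 / √x * (1 / √y) * (1 / (√w * (1 + w))) := by
  obtain ⟨hx0, hx1⟩ := hx
  obtain ⟨hy0, hy1⟩ := hy
  have h_left : y * (w * (1 + w)) ≤ (y + w) ^ 2 := by
    nlinarith [mul_pos hy0 hw, mul_pos hw hw]
  have h_right : x * (1 + w) ≤ (1 + x * w) ^ 2 := by
    nlinarith [mul_pos hx0 hw, sq_nonneg (x * w)]
  have h_sqrt : √x * √y * (√w * (1 + w)) ≤ (y + w) * (1 + x * w) := by
    refine (pow_le_pow_iff_left₀ (by positivity) (by positivity) two_ne_zero).1 ?_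
    calc (√x * √y * (√w * (1 + w))) ^ 2 = y * (w * (1 + w)) * (x * (1 + w)) := by
          simp only [mul_pow, Real.sq_sqrt, hx0.le, hy0.le, hw.le]
          ring
      _ ≤ (y + w) ^ 2 * (1 + x * w) ^ 2 := by gcongr
      _ = ((y + w) * (1 + x * w)) ^ 2 := by ring
  rw [one_div_mul_one_div, one_div_mul_one_div]
  exact one_div_le_one_div_of_le (by positivity) h_sqrt

lemma integrable_beukersKernel : Integrable (fun p : (ℝ × ℝ) × ℝ => beukersKernel p.1 p.2)
    ((unitVol.prod unitVol).prod posVol) := by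
  refine ((integrable_one_div_sqrt_unitVol.mul_prod integrable_one_div_sqrt_unitVol).mul_prod
    integrable_one_div_sqrt_mul_one_add_posVol).mono' ?_ ?_
  · unfold beukersKernel
    exact Measurable.aestronglyMeasurable (by fun_prop)
  · filter_upwards [ae_unitVol_prod_posVol_mem] with p hp
    obtain ⟨⟨hx, hy⟩, hw⟩ := hp
    rw [Real.norm_of_nonneg (beukersKernel_pos hx.1 hy.1 hw).le]
    exact beukersKernel_le hx hy hw

end BeukersKernel

section LogarithmicMoments

lemma integrable_pow_unitVol (a : ℕ) : Integrable (fun x : ℝ => x ^ a) unitVol :=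
  intervalIntegrable_iff_integrable_unitVol.1 ((continuous_pow a).intervalIntegrable _ _)

lemma integral_pow_unitVol (a : ℕ) : ∫ x, x ^ a ∂unitVol = 1 / ((a : ℝ) + 1) := by
  simp [← intervalIntegral_eq_integral_unitVol]

lemma integrable_neg_log_mul_pow_unitVol (a : ℕ) :
    Integrable (fun x : ℝ => -Real.log x * x ^ a) unitVol :=
  intervalIntegrable_iff_integrable_unitVol.1
    (intervalIntegral.intervalIntegrable_log'.neg.mul_continuousOn (by fun_prop))

lemma hasDerivAt_neg_log_mul_pow_primitive (a : ℕ) {x : ℝ} (hx : x ≠ 0) :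
    HasDerivAt
      (fun x : ℝ => -(x ^ a * (x * Real.log x)) / (a + 1) + x ^ (a + 1) / ((a : ℝ) + 1) ^ 2)
      (-Real.log x * x ^ a) x := by
  have h_ne : (a : ℝ) + 1 ≠ 0 := by positivity
  refine ((((hasDerivAt_pow a x).mul ((hasDerivAt_id x).mul (Real.hasDerivAt_log hx))).neg.div_const
    ((a : ℝ) + 1)).add ((hasDerivAt_pow (a + 1) x).div_const (((a : ℝ) + 1) ^ 2))).congr_deriv ?_
  cases a <;>
  · simp only [id, Pi.mul_apply, Nat.add_sub_cancel]
    push_cast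
    field_simp
    ring

lemma integral_neg_log_mul_pow_unitVol (a : ℕ) :
    ∫ x, -Real.log x * x ^ a ∂unitVol = 1 / ((a : ℝ) + 1) ^ 2 := by
  have h_cont : Continuous fun x : ℝ =>
      -(x ^ a * (x * Real.log x)) / (a + 1) + x ^ (a + 1) / ((a : ℝ) + 1) ^ 2 := by
    have := Real.continuous_mul_log
    fun_prop
  rw [← intervalIntegral_eq_integral_unitVol,
    intervalIntegral.integral_eq_sub_of_hasDerivAt_of_le zero_le_one h_cont.continuousOn
      (fun x hx => hasDerivAt_neg_log_mul_pow_primitive a hx.1.ne')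
      (intervalIntegrable_iff_integrable_unitVol.2 (integrable_neg_log_mul_pow_unitVol a))]
  simp

open Polynomial

lemma shiftedLegendre_mul_pow_eq_sum (n j : ℕ) (x : ℝ) :
    aeval x (shiftedLegendre n) * x ^ j
      = ∑ k ∈ Finset.range (n + 1), (-1) ^ k * (aperyBinom n k : ℝ) * x ^ (j + k) := by
  rw [aeval_shiftedLegendre_eq_sum, Finset.sum_mul]
  refine Finset.sum_congr rfl fun k _ => ?_
  ring

lemma neg_log_mul_shiftedLegendre_mul_pow_eq_sum (n j : ℕ) (x : ℝ) :
    -Real.log x * (aeval x (shiftedLegendre n) * x ^ j)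
      = ∑ k ∈ Finset.range (n + 1),
        (-1) ^ k * (aperyBinom n k : ℝ) * (-Real.log x * x ^ (j + k)) := by
  rw [shiftedLegendre_mul_pow_eq_sum, Finset.mul_sum]
  refine Finset.sum_congr rfl fun k _ => ?_
  ring

lemma integrable_shiftedLegendre_mul_pow (n j : ℕ) :
    Integrable (fun x : ℝ => aeval x (shiftedLegendre n) * x ^ j) unitVol := by
  simp only [shiftedLegendre_mul_pow_eq_sum]
  exact integrable_finsetSum _ fun k _ => (integrable_pow_unitVol _).const_mul _

lemma integral_shiftedLegendre_mul_pow (n j : ℕ) :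
    ∫ x, aeval x (shiftedLegendre n) * x ^ j ∂unitVol = legendreMellin n ((j : ℝ) + 1) := by
  simp only [shiftedLegendre_mul_pow_eq_sum]
  rw [integral_finsetSum _ fun k _ => (integrable_pow_unitVol _).const_mul _]
  refine Finset.sum_congr rfl fun k _ => ?_
  rw [integral_const_mul, integral_pow_unitVol]
  push_cast
  ring

lemma integrable_neg_log_mul_shiftedLegendre_mul_pow (n j : ℕ) :
    Integrable (fun x : ℝ => -Real.log x * (aeval x (shiftedLegendre n) * x ^ j)) unitVol := by
  simp only [neg_log_mul_shiftedLegendre_mul_pow_eq_sum]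
  exact integrable_finsetSum _ fun k _ => (integrable_neg_log_mul_pow_unitVol _).const_mul _

lemma integral_neg_log_mul_shiftedLegendre_mul_pow (n j : ℕ) :
    ∫ x, -Real.log x * (aeval x (shiftedLegendre n) * x ^ j) ∂unitVol
      = legendreLogMellin n ((j : ℝ) + 1) := by
  simp only [neg_log_mul_shiftedLegendre_mul_pow_eq_sum]
  rw [integral_finsetSum _ fun k _ => (integrable_neg_log_mul_pow_unitVol _).const_mul _]
  refine Finset.sum_congr rfl fun k _ => ?_
  rw [integral_const_mul, integral_neg_log_mul_pow_unitVol]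
  push_cast
  ring

/-- The summands `(-log x - log y)(xy)^j` of the geometric expansion of
`∫₀^∞ dw / ((y + w)(1 + xw)) = (-log x - log y) / (1 - xy)`. -/
noncomputable def logGeomTerm (j : ℕ) (q : ℝ × ℝ) : ℝ :=
  (-Real.log q.1 - Real.log q.2) * (q.1 * q.2) ^ j

lemma hasSum_logGeomTerm {x y : ℝ} (hx : x ∈ Set.Ioo (0 : ℝ) 1) (hy : y ∈ Set.Ioo (0 : ℝ) 1) :
    HasSum (fun j => logGeomTerm j (x, y)) (∫ w, beukersKernel (x, y) w ∂posVol) := by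
  have h_lt : x * y < 1 := mul_lt_one_of_nonneg_of_lt_one_left hx.1.le hx.2 hy.2.le
  rw [integral_beukersKernel hx.1 hy.1 h_lt, div_eq_mul_inv]
  exact (hasSum_geometric_of_lt_one (mul_pos hx.1 hy.1).le h_lt).mul_left _

lemma logGeomTerm_nonneg (j : ℕ) {x y : ℝ} (hx : x ∈ Set.Ioo (0 : ℝ) 1)
    (hy : y ∈ Set.Ioo (0 : ℝ) 1) : 0 ≤ logGeomTerm j (x, y) := by
  have h_log : 0 ≤ -Real.log x - Real.log y := by
    linarith [Real.log_nonpos hx.1.le hx.2.le, Real.log_nonpos hy.1.le hy.2.le]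
  exact mul_nonneg h_log (pow_nonneg (mul_pos hx.1 hy.1).le j)

lemma shiftedLegendre_mul_logGeomTerm (n j : ℕ) (q : ℝ × ℝ) :
    aeval q.1 (shiftedLegendre n) * aeval q.2 (shiftedLegendre n) * logGeomTerm j q
      = -Real.log q.1 * (aeval q.1 (shiftedLegendre n) * q.1 ^ j)
            * (aeval q.2 (shiftedLegendre n) * q.2 ^ j)
        + aeval q.1 (shiftedLegendre n) * q.1 ^ j
            * (-Real.log q.2 * (aeval q.2 (shiftedLegendre n) * q.2 ^ j)) := by
  unfold logGeomTerm
  ring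

lemma integrable_shiftedLegendre_mul_logGeomTerm (n j : ℕ) :
    Integrable (fun q : ℝ × ℝ =>
      aeval q.1 (shiftedLegendre n) * aeval q.2 (shiftedLegendre n) * logGeomTerm j q)
      (unitVol.prod unitVol) := by
  simp only [shiftedLegendre_mul_logGeomTerm]
  exact ((integrable_neg_log_mul_shiftedLegendre_mul_pow n j).mul_prod
    (integrable_shiftedLegendre_mul_pow n j)).add ((integrable_shiftedLegendre_mul_pow n j).mul_prod
    (integrable_neg_log_mul_shiftedLegendre_mul_pow n j))

lemma integral_shiftedLegendre_mul_logGeomTerm (n j : ℕ) :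
    ∫ q, aeval q.1 (shiftedLegendre n) * aeval q.2 (shiftedLegendre n) * logGeomTerm j q
      ∂(unitVol.prod unitVol) = negDerivMellinSq n ((j : ℝ) + 1) := by
  simp only [shiftedLegendre_mul_logGeomTerm]
  rw [integral_add ((integrable_neg_log_mul_shiftedLegendre_mul_pow n j).mul_prod
      (integrable_shiftedLegendre_mul_pow n j)) ((integrable_shiftedLegendre_mul_pow n j).mul_prod
      (integrable_neg_log_mul_shiftedLegendre_mul_pow n j)),
    integral_prod_mul (fun x : ℝ => -Real.log x * (aeval x (shiftedLegendre n) * x ^ j))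
      (fun y : ℝ => aeval y (shiftedLegendre n) * y ^ j),
    integral_prod_mul (fun x : ℝ => aeval x (shiftedLegendre n) * x ^ j)
      (fun y : ℝ => -Real.log y * (aeval y (shiftedLegendre n) * y ^ j)),
    integral_shiftedLegendre_mul_pow, integral_neg_log_mul_shiftedLegendre_mul_pow,
    negDerivMellinSq]
  ring

lemma integrable_logGeomTerm (j : ℕ) : Integrable (logGeomTerm j) (unitVol.prod unitVol) := by
  simpa [shiftedLegendre] using integrable_shiftedLegendre_mul_logGeomTerm 0 j

lemma integral_logGeomTerm (j : ℕ) :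
    ∫ q, logGeomTerm j q ∂(unitVol.prod unitVol) = 2 / ((j : ℝ) + 1) ^ 3 := by
  simpa [shiftedLegendre, negDerivMellinSq_zero] using
    integral_shiftedLegendre_mul_logGeomTerm 0 j

lemma summable_integral_norm_mul_logGeomTerm {φ : ℝ × ℝ → ℝ} {C : ℝ}
    (hφ : AEStronglyMeasurable φ (unitVol.prod unitVol))
    (hC : ∀ᵐ q ∂unitVol.prod unitVol, ‖φ q‖ ≤ C) :
    Summable fun j => ∫ q, ‖φ q * logGeomTerm j q‖ ∂(unitVol.prod unitVol) := by
  have h_cubes : Summable fun j : ℕ => C * (2 / ((j : ℝ) + 1) ^ 3) := by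
    have h_zeta := (summable_nat_add_iff 1).2 (Real.summable_one_div_nat_pow.2 (by simp : 1 < 3))
    simpa [div_eq_mul_inv] using (h_zeta.mul_left 2).mul_left C
  refine h_cubes.of_nonneg_of_le (fun j => integral_nonneg fun q => norm_nonneg _) fun j => ?_
  rw [← integral_logGeomTerm, ← integral_const_mul]
  refine integral_mono_ae ((integrable_logGeomTerm j).bdd_mul hφ hC).norm
    ((integrable_logGeomTerm j).const_mul C) ?_
  filter_upwards [hC, ae_unitVol_prod_mem] with q hq ⟨hx, hy⟩
  rw [norm_mul, Real.norm_of_nonneg (logGeomTerm_nonneg j hx hy)]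
  exact mul_le_mul_of_nonneg_right hq (logGeomTerm_nonneg j hx hy)

lemma hasSum_integral_mul_logGeomTerm {φ : ℝ × ℝ → ℝ} {C : ℝ}
    (hφ : AEStronglyMeasurable φ (unitVol.prod unitVol))
    (hC : ∀ᵐ q ∂unitVol.prod unitVol, ‖φ q‖ ≤ C) :
    HasSum (fun j => ∫ q, φ q * logGeomTerm j q ∂(unitVol.prod unitVol))
      (∫ q, ∫ w, φ q * beukersKernel q w ∂posVol ∂(unitVol.prod unitVol)) := by
  have h_integrable (j : ℕ) :
      Integrable (fun q => φ q * logGeomTerm j q) (unitVol.prod unitVol) :=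
    (integrable_logGeomTerm j).bdd_mul hφ hC
  have h_tsum : ∫ q, ∫ w, φ q * beukersKernel q w ∂posVol ∂(unitVol.prod unitVol)
      = ∫ q, ∑' j, φ q * logGeomTerm j q ∂(unitVol.prod unitVol) := by
    refine integral_congr_ae ?_
    filter_upwards [ae_unitVol_prod_mem] with q ⟨hx, hy⟩
    rw [integral_const_mul, ((hasSum_logGeomTerm hx hy).mul_left (φ q)).tsum_eq]
  rw [h_tsum]
  exact hasSum_integral_of_summable_integral_norm h_integrable
    (summable_integral_norm_mul_logGeomTerm hφ hC)

end LogarithmicMoments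

section Substitution

lemma image_div_add_Ioi {y : ℝ} (hy : 0 < y) :
    (fun w => w / (y + w)) '' Set.Ioi 0 = Set.Ioo 0 1 := by
  ext z
  constructor
  · rintro ⟨w, hw, rfl⟩
    have hw : 0 < w := hw
    refine ⟨by positivity, ?_⟩
    rw [div_lt_one (by positivity)]
    linarith
  · rintro ⟨hz0, hz1⟩
    have h_pos : 0 < 1 - z := sub_pos.2 hz1
    refine ⟨y * z / (1 - z), div_pos (mul_pos hy hz0) h_pos, ?_⟩
    field_simp
    ring

lemma injOn_div_add_Ioi {y : ℝ} (hy : 0 < y) :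
    Set.InjOn (fun w => w / (y + w)) (Set.Ioi 0) := by
  intro v hv w hw h_eq
  have hv : 0 < v := hv
  have hw : 0 < w := hw
  rw [div_eq_div_iff (by positivity) (by positivity)] at h_eq
  exact mul_left_cancel₀ hy.ne' (by linarith)

lemma hasDerivAt_div_add {y w : ℝ} (hyw : y + w ≠ 0) :
    HasDerivAt (fun w => w / (y + w)) (y / (y + w) ^ 2) w := by
  refine ((hasDerivAt_id w).div ((hasDerivAt_id w).const_add y) hyw).congr_deriv ?_
  simp only [id]
  ring

lemma hasDerivWithinAt_div_add_Ioi {y : ℝ} (hy : 0 < y) :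
    ∀ w ∈ Set.Ioi (0 : ℝ),
      HasDerivWithinAt (fun w => w / (y + w)) (y / (y + w) ^ 2) (Set.Ioi 0) w :=
  fun _ hw => (hasDerivAt_div_add (add_pos hy hw).ne').hasDerivWithinAt

lemma integrable_unitVol_iff_integrable_posVol {y : ℝ} (hy : 0 < y) (f : ℝ → ℝ) :
    Integrable f unitVol
      ↔ Integrable (fun w => y / (y + w) ^ 2 * f (w / (y + w))) posVol := by
  have h_iff := integrableOn_image_iff_integrableOn_abs_deriv_smul measurableSet_Ioi
    (hasDerivWithinAt_div_add_Ioi hy) (injOn_div_add_Ioi hy) f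
  simpa only [image_div_add_Ioi hy, abs_div, abs_sq, abs_of_pos hy, smul_eq_mul, IntegrableOn]
    using h_iff

lemma integral_unitVol_eq_integral_posVol {y : ℝ} (hy : 0 < y) (f : ℝ → ℝ) :
    ∫ z, f z ∂unitVol = ∫ w, y / (y + w) ^ 2 * f (w / (y + w)) ∂posVol := by
  have h_eq := integral_image_eq_integral_abs_deriv_smul measurableSet_Ioi
    (hasDerivWithinAt_div_add_Ioi hy) (injOn_div_add_Ioi hy) f
  simpa only [image_div_add_Ioi hy, abs_div, abs_sq, abs_of_pos hy, smul_eq_mul] using h_eq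

/-- Beukers' integrand on the unit cube. -/
noncomputable def beukersIntegrand (n : ℕ) (p : ℝ × ℝ × ℝ) : ℝ :=
  (p.1 * p.2.1 * p.2.2 * (1 - p.1) * (1 - p.2.1) * (1 - p.2.2) /
      (1 - p.2.2 + p.1 * p.2.1 * p.2.2)) ^ n *
    (1 / (1 - p.2.2 + p.1 * p.2.1 * p.2.2))

/-- The integrand that the substitution `z = w / (y + w)` produces from `beukersIntegrand n`; for
fixed `w` it is a function of `x` times a function of `y`. -/
noncomputable def separatedIntegrand (n : ℕ) (q : ℝ × ℝ) (w : ℝ) : ℝ :=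
  q.1 ^ n * (1 - q.1) ^ n * w ^ n / (1 + q.1 * w) ^ (n + 1)
    * (q.2 ^ n * (1 - q.2) ^ n / (q.2 + w) ^ (n + 1))

lemma beukersIntegrand_nonneg (n : ℕ) {x y z : ℝ} (hx : x ∈ Set.Ioo (0 : ℝ) 1)
    (hy : y ∈ Set.Ioo (0 : ℝ) 1) (hz : z ∈ Set.Ioo (0 : ℝ) 1) :
    0 ≤ beukersIntegrand n (x, y, z) := by
  have hx' : 0 < 1 - x := sub_pos.2 hx.2
  have hy' : 0 < 1 - y := sub_pos.2 hy.2
  have hz' : 0 < 1 - z := sub_pos.2 hz.2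
  have := hx.1
  have := hy.1
  have := hz.1
  unfold beukersIntegrand
  positivity

lemma deriv_mul_beukersIntegrand_div_add (n : ℕ) {x y w : ℝ} (hx : 0 < x) (hy : 0 < y)
    (hw : 0 < w) :
    y / (y + w) ^ 2 * beukersIntegrand n (x, y, w / (y + w)) = separatedIntegrand n (x, y) w := by
  have h_compl : 1 - w / (y + w) = y / (y + w) := by
    field_simp
    ring
  have h_denom : y / (y + w) + x * y * (w / (y + w)) = y * (1 + x * w) / (y + w) := by
    field_simp
  have h_base : x * y * (w / (y + w)) * (1 - x) * (1 - y) * (y / (y + w))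
        / (y * (1 + x * w) / (y + w))
      = x * (1 - x) * w / (1 + x * w) * (y * (1 - y) / (y + w)) := by
    field_simp
  simp only [beukersIntegrand, separatedIntegrand, h_compl, h_denom, h_base, mul_pow, div_pow,
    pow_succ]
  field_simp

lemma separatedIntegrand_eq_pow_mul_beukersKernel (n : ℕ) (q : ℝ × ℝ) (w : ℝ) :
    separatedIntegrand n q w
      = (q.1 * w / (1 + q.1 * w) * (1 - q.1) * (q.2 / (q.2 + w) * (1 - q.2))) ^ n
        * beukersKernel q w := by
  simp only [separatedIntegrand, beukersKernel, div_eq_mul_inv, mul_pow, pow_succ, mul_inv]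
  ring

lemma norm_separatedIntegrand_le (n : ℕ) {x y w : ℝ} (hx : x ∈ Set.Ioo (0 : ℝ) 1)
    (hy : y ∈ Set.Ioo (0 : ℝ) 1) (hw : 0 < w) :
    ‖separatedIntegrand n (x, y) w‖ ≤ beukersKernel (x, y) w := by
  obtain ⟨hx0, hx1⟩ := hx
  obtain ⟨hy0, hy1⟩ := hy
  have hx' : 0 < 1 - x := sub_pos.2 hx1
  have hy' : 0 < 1 - y := sub_pos.2 hy1
  have h_kernel := beukersKernel_pos hx0 hy0 hw
  have h_fst : x * w / (1 + x * w) * (1 - x) ≤ 1 :=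
    mul_le_one₀ (div_le_one_of_le₀ (by linarith) (by positivity)) hx'.le (by linarith)
  have h_snd : y / (y + w) * (1 - y) ≤ 1 :=
    mul_le_one₀ (div_le_one_of_le₀ (by linarith) (by positivity)) hy'.le (by linarith)
  rw [separatedIntegrand_eq_pow_mul_beukersKernel, Real.norm_of_nonneg (by positivity)]
  exact mul_le_of_le_one_left h_kernel.le
    (pow_le_one₀ (by positivity) (mul_le_one₀ h_fst (by positivity) h_snd))

lemma integrable_separatedIntegrand (n : ℕ) :
    Integrable (fun p : (ℝ × ℝ) × ℝ => separatedIntegrand n p.1 p.2)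
      ((unitVol.prod unitVol).prod posVol) := by
  refine integrable_beukersKernel.mono' ?_ ?_
  · unfold separatedIntegrand
    exact Measurable.aestronglyMeasurable (by fun_prop)
  · filter_upwards [ae_unitVol_prod_posVol_mem] with p ⟨⟨hx, hy⟩, hw⟩
    exact norm_separatedIntegrand_le n hx hy hw

lemma deriv_mul_beukersIntegrand_ae_eq (n : ℕ) {x y : ℝ} (hx : 0 < x) (hy : 0 < y) :
    (fun w => y / (y + w) ^ 2 * beukersIntegrand n (x, y, w / (y + w)))
      =ᵐ[posVol] separatedIntegrand n (x, y) := by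
  filter_upwards [ae_restrict_mem measurableSet_Ioi] with w hw
  exact deriv_mul_beukersIntegrand_div_add n hx hy hw

lemma integral_beukersIntegrand_right (n : ℕ) {x y : ℝ} (hx : 0 < x) (hy : 0 < y) :
    ∫ z, beukersIntegrand n (x, y, z) ∂unitVol = ∫ w, separatedIntegrand n (x, y) w ∂posVol := by
  rw [integral_unitVol_eq_integral_posVol hy,
    integral_congr_ae (deriv_mul_beukersIntegrand_ae_eq n hx hy)]

lemma integrable_beukersIntegrand_prodAssoc (n : ℕ) :
    Integrable (fun p : (ℝ × ℝ) × ℝ => beukersIntegrand n (p.1.1, p.1.2, p.2))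
      ((unitVol.prod unitVol).prod unitVol) := by
  have h_meas : Measurable fun p : (ℝ × ℝ) × ℝ => beukersIntegrand n (p.1.1, p.1.2, p.2) := by
    unfold beukersIntegrand
    fun_prop
  refine (integrable_prod_iff h_meas.aestronglyMeasurable).2 ⟨?_, ?_⟩
  · filter_upwards [ae_unitVol_prod_mem, (integrable_separatedIntegrand n).prod_right_ae]
      with q ⟨hx, hy⟩ h_separated
    exact (integrable_unitVol_iff_integrable_posVol hy.1 _).2
      (h_separated.congr (deriv_mul_beukersIntegrand_ae_eq n hx.1 hy.1).symm)
  · refine (integrable_separatedIntegrand n).integral_prod_left.congr ?_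
    filter_upwards [ae_unitVol_prod_mem] with q ⟨hx, hy⟩
    refine (integral_beukersIntegrand_right n hx.1 hy.1).symm.trans (integral_congr_ae ?_)
    filter_upwards [ae_restrict_mem measurableSet_Ioo] with z hz
    exact (Real.norm_of_nonneg (beukersIntegrand_nonneg n hx hy hz)).symm

lemma integrable_beukersIntegrand (n : ℕ) :
    Integrable (beukersIntegrand n) (unitVol.prod (unitVol.prod unitVol)) :=
  ((measurePreserving_prodAssoc unitVol unitVol unitVol).integrable_comp_emb
    MeasurableEquiv.prodAssoc.measurableEmbedding).1 (integrable_beukersIntegrand_prodAssoc n)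

lemma integral_beukersIntegrand_eq_integral_separatedIntegrand (n : ℕ) :
    ∫ p, beukersIntegrand n p ∂(unitVol.prod (unitVol.prod unitVol))
      = ∫ q, ∫ w, separatedIntegrand n q w ∂posVol ∂(unitVol.prod unitVol) := by
  calc ∫ p, beukersIntegrand n p ∂(unitVol.prod (unitVol.prod unitVol))
      = ∫ p, beukersIntegrand n (p.1.1, p.1.2, p.2) ∂((unitVol.prod unitVol).prod unitVol) :=
        ((measurePreserving_prodAssoc unitVol unitVol unitVol).integral_comp
          MeasurableEquiv.prodAssoc.measurableEmbedding (beukersIntegrand n)).symm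
    _ = ∫ q, ∫ z, beukersIntegrand n (q.1, q.2, z) ∂unitVol ∂(unitVol.prod unitVol) :=
        integral_prod _ (integrable_beukersIntegrand_prodAssoc n)
    _ = ∫ q, ∫ w, separatedIntegrand n q w ∂posVol ∂(unitVol.prod unitVol) := by
        refine integral_congr_ae ?_
        filter_upwards [ae_unitVol_prod_mem] with q ⟨hx, hy⟩
        exact integral_beukersIntegrand_right n hx.1 hy.1

end Substitution

section BeukersIntegral

open Polynomial

lemma exists_norm_shiftedLegendre_mul_le (n : ℕ) : ∃ C, ∀ᵐ q ∂unitVol.prod unitVol,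
    ‖aeval q.1 (shiftedLegendre n) * aeval q.2 (shiftedLegendre n)‖ ≤ C := by
  obtain ⟨C, hC⟩ := (isCompact_Icc (a := (0 : ℝ)) (b := 1)).exists_bound_of_continuousOn
    (shiftedLegendre n).continuous_aeval.continuousOn
  refine ⟨C * C, ?_⟩
  filter_upwards [ae_unitVol_prod_mem] with q ⟨hx, hy⟩
  rw [norm_mul]
  have h_fst := hC q.1 (Set.Ioo_subset_Icc_self hx)
  have h_snd := hC q.2 (Set.Ioo_subset_Icc_self hy)
  exact mul_le_mul h_fst h_snd (norm_nonneg _) ((norm_nonneg _).trans h_fst)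

lemma continuous_shiftedLegendre_mul (n : ℕ) : Continuous fun q : ℝ × ℝ =>
    aeval q.1 (shiftedLegendre n) * aeval q.2 (shiftedLegendre n) :=
  ((shiftedLegendre n).continuous_aeval.comp continuous_fst).mul
    ((shiftedLegendre n).continuous_aeval.comp continuous_snd)

lemma integrable_shiftedLegendre_mul_beukersKernel (n : ℕ) :
    Integrable (fun p : (ℝ × ℝ) × ℝ => aeval p.1.1 (shiftedLegendre n)
      * aeval p.1.2 (shiftedLegendre n) * beukersKernel p.1 p.2)
      ((unitVol.prod unitVol).prod posVol) := by
  obtain ⟨C, hC⟩ := exists_norm_shiftedLegendre_mul_le n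
  exact integrable_beukersKernel.bdd_mul
    ((continuous_shiftedLegendre_mul n).comp continuous_fst).aestronglyMeasurable
    (Measure.quasiMeasurePreserving_fst.ae hC)

lemma integral_separatedIntegrand_eq_integral_shiftedLegendre (n : ℕ) {w : ℝ} (hw : 0 < w) :
    ∫ q, separatedIntegrand n q w ∂(unitVol.prod unitVol)
      = ∫ q, aeval q.1 (shiftedLegendre n) * aeval q.2 (shiftedLegendre n) * beukersKernel q w
        ∂(unitVol.prod unitVol) := by
  have h_kernel (q : ℝ × ℝ) :
      aeval q.1 (shiftedLegendre n) * aeval q.2 (shiftedLegendre n) * beukersKernel q w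
        = aeval q.1 (shiftedLegendre n) / (1 + q.1 * w)
          * (aeval q.2 (shiftedLegendre n) / (q.2 + w)) := by
    rw [beukersKernel, div_mul_div_comm, mul_comm (q.2 + w), mul_one_div]
  simp only [h_kernel, separatedIntegrand]
  rw [integral_prod_mul (fun x : ℝ => x ^ n * (1 - x) ^ n * w ^ n / (1 + x * w) ^ (n + 1))
      (fun y : ℝ => y ^ n * (1 - y) ^ n / (y + w) ^ (n + 1)),
    integral_prod_mul (fun x : ℝ => aeval x (shiftedLegendre n) / (1 + x * w))
      (fun y : ℝ => aeval y (shiftedLegendre n) / (y + w))]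
  simp only [← intervalIntegral_eq_integral_unitVol]
  rw [integral_shiftedLegendre_div_add n hw, integral_shiftedLegendre_div_one_add_mul n hw]

lemma integral_beukersIntegrand_eq_integral_shiftedLegendre (n : ℕ) :
    ∫ p, beukersIntegrand n p ∂(unitVol.prod (unitVol.prod unitVol))
      = ∫ q, ∫ w, aeval q.1 (shiftedLegendre n) * aeval q.2 (shiftedLegendre n)
          * beukersKernel q w ∂posVol ∂(unitVol.prod unitVol) := by
  calc ∫ p, beukersIntegrand n p ∂(unitVol.prod (unitVol.prod unitVol))
      = ∫ q, ∫ w, separatedIntegrand n q w ∂posVol ∂(unitVol.prod unitVol) :=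
        integral_beukersIntegrand_eq_integral_separatedIntegrand n
    _ = ∫ w, ∫ q, separatedIntegrand n q w ∂(unitVol.prod unitVol) ∂posVol :=
        integral_integral_swap (integrable_separatedIntegrand n)
    _ = ∫ w, ∫ q, aeval q.1 (shiftedLegendre n) * aeval q.2 (shiftedLegendre n)
          * beukersKernel q w ∂(unitVol.prod unitVol) ∂posVol :=
        setIntegral_congr_fun measurableSet_Ioi fun w hw =>
          integral_separatedIntegrand_eq_integral_shiftedLegendre n hw
    _ = _ := (integral_integral_swap (integrable_shiftedLegendre_mul_beukersKernel n)).symm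

lemma hasSum_integral_beukersIntegrand (n : ℕ) :
    HasSum (fun j : ℕ => negDerivMellinSq n ((j : ℝ) + 1))
      (∫ p, beukersIntegrand n p ∂(unitVol.prod (unitVol.prod unitVol))) := by
  obtain ⟨C, hC⟩ := exists_norm_shiftedLegendre_mul_le n
  simpa only [integral_beukersIntegrand_eq_integral_shiftedLegendre,
    integral_shiftedLegendre_mul_logGeomTerm] using
    hasSum_integral_mul_logGeomTerm (continuous_shiftedLegendre_mul n).aestronglyMeasurable hC

lemma volume_restrict_unitCube :
    volume.restrict (Set.Ioo (0 : ℝ) 1 ×ˢ Set.Ioo (0 : ℝ) 1 ×ˢ Set.Ioo (0 : ℝ) 1)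
      = unitVol.prod (unitVol.prod unitVol) := by
  rw [Measure.prod_restrict, Measure.prod_restrict]
  rfl

end BeukersIntegral

/-- Beukers' integral representation: for all `n ≥ 0`,
`A_n ζ(3) - B_n = (1/2) ∫₀¹∫₀¹∫₀¹ (xyz(1-x)(1-y)(1-z)/(1-z+xyz))ⁿ dx dy dz /(1-z+xyz)`,
the triple integral over the open unit cube being convergent. -/
theorem apery_integral_representation (n : ℕ) :
    IntegrableOn
      (fun p : ℝ × ℝ × ℝ =>
        (p.1 * p.2.1 * p.2.2 * (1 - p.1) * (1 - p.2.1) * (1 - p.2.2) /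
            (1 - p.2.2 + p.1 * p.2.1 * p.2.2)) ^ n *
          (1 / (1 - p.2.2 + p.1 * p.2.1 * p.2.2)))
      (Set.Ioo (0:ℝ) 1 ×ˢ Set.Ioo (0:ℝ) 1 ×ˢ Set.Ioo (0:ℝ) 1) ∧
    (aperyA n : ℝ) * (∑' m : ℕ, 1 / ((m : ℝ) + 1) ^ 3) - (aperyB n : ℝ)
      = (1 / 2) * ∫ p in Set.Ioo (0:ℝ) 1 ×ˢ Set.Ioo (0:ℝ) 1 ×ˢ Set.Ioo (0:ℝ) 1,
          (p.1 * p.2.1 * p.2.2 * (1 - p.1) * (1 - p.2.1) * (1 - p.2.2) /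
              (1 - p.2.2 + p.1 * p.2.1 * p.2.2)) ^ n *
            (1 / (1 - p.2.2 + p.1 * p.2.1 * p.2.2)) := by
  rw [IntegrableOn, volume_restrict_unitCube]
  refine ⟨integrable_beukersIntegrand n, ?_⟩
  have h_integral : ∫ p, beukersIntegrand n p ∂(unitVol.prod (unitVol.prod unitVol))
      = 2 * ((aperyA n : ℝ) * (∑' m : ℕ, 1 / ((m : ℝ) + 1) ^ 3) - (aperyB n : ℝ)) :=
    eq_aperyA_mul_zeta_three_sub_aperyB hasSum_integral_beukersIntegrand n
  unfold beukersIntegrand at h_integral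
  rw [h_integral]
  ring
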